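/- For all non-negative integers n and r with n ≥ r, one has 2^r · r! · S_B(n,r) = Σ_{k=0}^{r} A_B(n,k) · C(n−k, r−k), where C(a,b) denotes the binomial coefficient. -/

import Mathlib

open Classical Finset

/-! ### Signed permutations (type B), window notation -/

/-- `w` is the window notation of a signed permutation of `{1,…,n}`. -/
def IsSignedPerm {n : ℕ} (w : Fin n → ℤ) : Prop :=
  (∀ i, 1 ≤ |w i| ∧ |w i| ≤ (n : ℤ)) ∧ Function.Injective fun i => |w i|

/-- The value `β(i)` for `1 ≤ i ≤ n`, and `0` otherwise (so `β(0) = 0`). -/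
def bVal {n : ℕ} (w : Fin n → ℤ) (i : ℕ) : ℤ :=
  if h : 1 ≤ i ∧ i ≤ n then w ⟨i - 1, by omega⟩ else 0

/-- Type `B` descent number: `#{i ∈ {0,…,n−1} : β(i) > β(i+1)}`, with `β(0) = 0`. -/
noncomputable def desB {n : ℕ} (w : Fin n → ℤ) : ℕ :=
  ((Finset.range n).filter fun i => bVal w (i + 1) < bVal w i).card

/-- Type `B` Eulerian number `A_B(n,k)`. -/
noncomputable def EulB (n k : ℕ) : ℕ :=
  Nat.card { w : Fin n → ℤ // IsSignedPerm w ∧ desB w = k }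

/-- Type `D` descent number: as in type `B` but with the convention `γ(0) = −γ(2)`. -/
noncomputable def desD {n : ℕ} (w : Fin n → ℤ) : ℕ :=
  ((Finset.range n).filter fun i =>
    bVal w (i + 1) < (if i = 0 then -(bVal w 2) else bVal w i)).card

/-- `w` has an even number of negative entries. -/
def IsEvenSigned {n : ℕ} (w : Fin n → ℤ) : Prop :=
  Even ((Finset.univ.filter fun i => w i < 0)).card

/-- Type `D` Eulerian number `A_D(n,k)`. -/
noncomputable def EulD (n k : ℕ) : ℕ :=
  Nat.card { w : Fin n → ℤ // IsSignedPerm w ∧ IsEvenSigned w ∧ desD w = k }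

/-! ### Set partitions of types B and D -/

/-- The negative `−C` of a block `C`. -/
def negSet (C : Finset ℤ) : Finset ℤ := C.image fun x => -x

/-- A `Bₙ`-partition: a set partition of `{−n,…,−1,1,…,n}` such that at most one block
satisfies `C = −C` (the zero-block), and `−C` is a block whenever `C` is. -/
structure BPartition (n : ℕ) where
  blocks : Finset (Finset ℤ)
  cover : ∀ x : ℤ, (x ≠ 0 ∧ |x| ≤ (n : ℤ)) ↔ ∃ C ∈ blocks, x ∈ C
  nonempty : ∀ C ∈ blocks, C.Nonempty
  disj : ∀ C ∈ blocks, ∀ C' ∈ blocks, C ≠ C' → Disjoint C C'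
  closed : ∀ C ∈ blocks, negSet C ∈ blocks
  zeroUnique : ∀ C ∈ blocks, ∀ C' ∈ blocks, negSet C = C → negSet C' = C' → C = C'

/-- A `Dₙ`-partition: a `Bₙ`-partition whose zero-block, if present, has at least
two positive elements. -/
def IsDPartition {n : ℕ} (P : BPartition n) : Prop :=
  ∀ C ∈ P.blocks, negSet C = C → 2 ≤ (C.filter fun x => 0 < x).card

/-- `P` has exactly `r` pairs `{C, −C}` of nonzero blocks. -/
def hasPairs {n : ℕ} (P : BPartition n) (r : ℕ) : Prop :=
  (P.blocks.filter fun C => negSet C ≠ C).card = 2 * r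

/-- Stirling number of the second kind of type `B`. -/
noncomputable def SB (n r : ℕ) : ℕ :=
  Nat.card { P : BPartition n // hasPairs P r }

/-- Stirling number of the second kind of type `D`. -/
noncomputable def SD (n r : ℕ) : ℕ :=
  Nat.card { P : BPartition n // IsDPartition P ∧ hasPairs P r }

/-- An ordered `Bₙ`-partition: a `Bₙ`-partition with a linear order on its blocks in
which the zero-block (if present) comes first and `C, −C` are always adjacent. -/
structure OrderedBPartition (n : ℕ) where
  P : BPartition n
  order : List (Finset ℤ)
  nodup : order.Nodup
  same : order.toFinset = P.blocks
  zeroFirst : ∀ C ∈ P.blocks, negSet C = C → order[0]? = some C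
  adjacent : ∀ C ∈ P.blocks, negSet C ≠ C →
    ∃ i : ℕ, (order[i]? = some C ∧ order[i+1]? = some (negSet C)) ∨
             (order[i]? = some (negSet C) ∧ order[i+1]? = some C)

/-! ### Classical Stirling and Eulerian numbers -/

/-- The classical Stirling number of the second kind `S(n,r)`. -/
noncomputable def Stir (n r : ℕ) : ℕ :=
  Nat.card { P : Finpartition (Finset.univ : Finset (Fin n)) // P.parts.card = r }

/-- Number of descents of a permutation of `{1,…,n}`. -/
noncomputable def desA {n : ℕ} (σ : Equiv.Perm (Fin n)) : ℕ :=
  ((Finset.range (n - 1)).filter fun i =>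
    ∃ h : i + 1 < n, σ ⟨i + 1, h⟩ < σ ⟨i, Nat.lt_of_succ_lt h⟩).card

/-- The classical Eulerian number `A(n,k)`: permutations with `k−1` descents
(and `A(n,0) = 0`). -/
noncomputable def EulA (n k : ℕ) : ℕ :=
  if k = 0 then 0 else Nat.card { σ : Equiv.Perm (Fin n) // desA σ = k - 1 }

/-! ### Colored permutations -/

/-- `π` is (the window notation of) a colored permutation in `G_{m,n}`. -/
def IsColoredPerm {m n : ℕ} (π : Fin n → Fin n × ZMod m) : Prop :=
  Function.Bijective fun i => (π i).1

/-- The color order `a ≺ b` on the colored alphabet. -/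
def colorLt {m n : ℕ} (a b : Fin n × ZMod m) : Prop :=
  b.2.val < a.2.val ∨ (a.2 = b.2 ∧ a.1 < b.1)

/-- The descent number `des_G` of a colored permutation. -/
noncomputable def desG {m n : ℕ} (π : Fin n → Fin n × ZMod m) : ℕ :=
  ((Finset.range (n - 1)).filter fun i =>
    ∃ h : i + 1 < n, colorLt (π ⟨i + 1, h⟩) (π ⟨i, Nat.lt_of_succ_lt h⟩)).card
  + (if h : 0 < n then (if (π ⟨0, h⟩).2 ≠ 0 then 1 else 0) else 0)

/-- The Eulerian number `A_m(n,k)` of `G_{m,n}`. -/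
noncomputable def EulG (m n k : ℕ) : ℕ :=
  Nat.card { π : Fin n → Fin n × ZMod m // IsColoredPerm π ∧ desG π = k }

/-- The shift `C^{[t]}` of a block of the colored alphabet. -/
def shiftBlock {m n : ℕ} (t : ZMod m) (C : Finset (Fin n × ZMod m)) :
    Finset (Fin n × ZMod m) :=
  C.image fun p => (p.1, p.2 + t)

/-- A `G_{m,n}`-partition. -/
structure GPartition (m n : ℕ) where
  blocks : Finset (Finset (Fin n × ZMod m))
  cover : ∀ x : Fin n × ZMod m, ∃ C ∈ blocks, x ∈ C
  nonempty : ∀ C ∈ blocks, C.Nonempty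
  disj : ∀ C ∈ blocks, ∀ C' ∈ blocks, C ≠ C' → Disjoint C C'
  closed : ∀ C ∈ blocks, shiftBlock 1 C ∈ blocks
  zeroUnique : ∀ C ∈ blocks, ∀ C' ∈ blocks,
    shiftBlock 1 C = C → shiftBlock 1 C' = C' → C = C'

/-- The number of equivalence classes (orbits under shifting) of nonzero blocks. -/
noncomputable def numClasses {m n : ℕ} (P : GPartition m n) : ℕ :=
  ((P.blocks.filter fun C => shiftBlock 1 C ≠ C).image
    fun C => (Finset.range m).image fun t => shiftBlock (t : ZMod m) C).card

/-- Stirling number of the second kind `S_m(n,r)` for `G_{m,n}`. -/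
noncomputable def SG (m n r : ℕ) : ℕ :=
  Nat.card { P : GPartition m n // numClasses P = r }

/-- An ordered `G_{m,n}`-partition. -/
structure OrderedGPartition (m n : ℕ) where
  P : GPartition m n
  order : List (Finset (Fin n × ZMod m))
  nodup : order.Nodup
  same : order.toFinset = P.blocks
  zeroFirst : ∀ C ∈ P.blocks, shiftBlock 1 C = C → order[0]? = some C
  consec : ∀ C ∈ P.blocks, shiftBlock 1 C ≠ C →
    ∃ i : ℕ, ∃ s : ZMod m, ∀ t : ℕ, t < m →
      order[i + t]? = some (shiftBlock (s + (t : ZMod m)) C)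

def OFp (n r : ℕ) (f : ℤ → ℤ) : Prop :=
  (∀ x, f (-x) = -f x) ∧ (∀ x, (n : ℤ) < |x| → f x = 0) ∧ (∀ x, |f x| ≤ (r : ℤ)) ∧
    ∀ j : ℤ, 1 ≤ j → j ≤ r → ∃ x, f x = j

def PTp (n r : ℕ) (p : (Fin n → ℤ) × Finset ℕ) : Prop :=
  IsSignedPerm p.1 ∧ ((Finset.range n).filter fun i => bVal p.1 (i + 1) < bVal p.1 i) ⊆ p.2 ∧
    p.2 ⊆ Finset.range n ∧ p.2.card = r

def cT (T : Finset ℕ) (m : ℕ) : ℕ := (T.filter (· < m)).card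

lemma cT_zero (T : Finset ℕ) : cT T 0 = 0 := by simp [cT]

lemma cT_succ (T : Finset ℕ) (m : ℕ) : cT T (m + 1) = cT T m + if m ∈ T then 1 else 0 := by
  unfold cT
  split_ifs with h
  · have : T.filter (· < m + 1) = insert m (T.filter (· < m)) := by
      ext x; simp only [mem_filter, mem_insert]; grind
    rw [this, card_insert_of_notMem (by simp)]
  · have : T.filter (· < m + 1) = (T.filter (· < m)) := by
      ext x; simp only [mem_filter]; grind
    rw [this]; rfl

lemma cT_mono (T : Finset ℕ) : Monotone (cT T) := by
  apply monotone_nat_of_le_succ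
  intro m; rw [cT_succ]; omega

lemma cT_top (T : Finset ℕ) (n : ℕ) (h : T ⊆ Finset.range n) : cT T n = T.card := by
  unfold cT; congr 1; apply filter_true_of_mem
  intro x hx; simpa using h hx

noncomputable def phi {n : ℕ} (w : Fin n → ℤ) (T : Finset ℕ) (x : ℤ) : ℤ :=
  (∑ i, if w i = x then (cT T (i + 1) : ℤ) else 0) - ∑ i, if w i = -x then (cT T (i + 1) : ℤ) else 0

lemma sp_inj {n : ℕ} {w : Fin n → ℤ} (hw : IsSignedPerm w) {i j : Fin n}
    (h : w i = w j ∨ w i = - w j) : i = j := by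
  apply hw.2
  rcases h with h | h <;> simp [h]

lemma sp_ne {n : ℕ} {w : Fin n → ℤ} (hw : IsSignedPerm w) (i : Fin n) : w i ≠ 0 := by
  intro h; have := (hw.1 i).1; simp [h] at this

lemma sp_surj {n : ℕ} {w : Fin n → ℤ} (hw : IsSignedPerm w) (x : ℤ) (h0 : x ≠ 0)
    (hx : |x| ≤ n) : ∃ i, w i = x ∨ w i = -x := by
  have h1 : (univ.image fun i => |w i|) = Finset.Icc 1 (n : ℤ) := by
    apply eq_of_subset_of_card_le
    · intro y hy
      simp only [mem_image, mem_univ, true_and] at hy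
      obtain ⟨i, rfl⟩ := hy
      simpa using hw.1 i
    · rw [card_image_of_injective _ hw.2]; simp
  have h2 : |x| ∈ (univ.image fun i => |w i|) := by
    rw [h1]; simp only [mem_Icc]; exact ⟨Int.one_le_abs h0, hx⟩
  simp only [mem_image, mem_univ, true_and] at h2
  obtain ⟨i, hi⟩ := h2
  exact ⟨i, abs_eq_abs.1 hi⟩

lemma phi_w {n : ℕ} {w : Fin n → ℤ} (hw : IsSignedPerm w) (T : Finset ℕ) (i : Fin n) :
    phi w T (w i) = cT T (i + 1) := by
  unfold phi
  rw [sum_eq_single i, sum_eq_zero]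
  · simp
  · intro j _
    rw [if_neg]
    intro h
    have := sp_inj hw (Or.inr h)
    subst this
    have := sp_ne hw j
    omega
  · intro j _ hj
    rw [if_neg]
    intro h
    exact hj (sp_inj hw (Or.inl h))
  · simp

lemma phi_odd {n : ℕ} (w : Fin n → ℤ) (T : Finset ℕ) (x : ℤ) : phi w T (-x) = - phi w T x := by
  unfold phi; simp

lemma phi_supp {n : ℕ} {w : Fin n → ℤ} (hw : IsSignedPerm w) (T : Finset ℕ) (x : ℤ)
    (hx : (n : ℤ) < |x|) : phi w T x = 0 := by
  unfold phi
  rw [sum_eq_zero, sum_eq_zero]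
  · simp
  all_goals
    intro j _
    rw [if_neg]
    intro h
    have := (hw.1 j).2
    rw [h] at this
    try rw [abs_neg] at this
    omega

lemma odd_ext {n : ℕ} {w : Fin n → ℤ} (hw : IsSignedPerm w) {f g : ℤ → ℤ}
    (hf : ∀ x, f (-x) = -f x) (hg : ∀ x, g (-x) = -g x)
    (hf' : ∀ x, (n : ℤ) < |x| → f x = 0) (hg' : ∀ x, (n : ℤ) < |x| → g x = 0)
    (h : ∀ i, f (w i) = g (w i)) : f = g := by
  funext x
  by_cases hx : (n : ℤ) < |x|
  · rw [hf' x hx, hg' x hx]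
  by_cases h0 : x = 0
  · have h1 := hf 0
    have h2 := hg 0
    simp only [neg_zero] at h1 h2
    subst h0; omega
  obtain ⟨i, hi | hi⟩ := sp_surj hw x h0 (by omega)
  · rw [← hi, h]
  · have := h i
    rw [hi, hf, hg] at this
    omega

lemma phi_mem {n r : ℕ} (p : (Fin n → ℤ) × Finset ℕ) (hp : PTp n r p) : OFp n r (phi p.1 p.2) := by
  obtain ⟨w, T⟩ := p
  obtain ⟨hw, hD, hT, hr⟩ := hp
  dsimp only at *
  refine ⟨phi_odd w T, phi_supp hw T, ?_, ?_⟩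
  · intro x
    by_cases hx : (n : ℤ) < |x|
    · simp [phi_supp hw T x hx]
    by_cases h0 : x = 0
    · have h1 := phi_odd w T 0
      simp only [neg_zero] at h1
      have : phi w T x = 0 := by subst h0; omega
      simp [this]
    have key : ∀ i, |phi w T (w i)| ≤ r := by
      intro i
      rw [phi_w hw, Nat.abs_cast, ← hr, ← cT_top T n hT]
      exact_mod_cast cT_mono T i.2
    obtain ⟨i, hi | hi⟩ := sp_surj hw x h0 (by omega)
    · rw [← hi]; exact key i
    · have := key i
      rwa [hi, phi_odd, abs_neg] at this
  · intro j h1 hj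
    have hex : ∃ m, j ≤ cT T m := ⟨n, by rw [cT_top T n hT, hr]; exact hj⟩
    have hs := Nat.find_spec hex
    have hmin := fun m => @Nat.find_min _ _ hex m
    set m := Nat.find hex with hm
    have hmn : m ≤ n := Nat.find_min' hex (by rw [cT_top T n hT, hr]; exact hj)
    clear_value m
    cases m with
    | zero => rw [cT_zero] at hs; simp at hs; omega
    | succ k =>
      have := hmin k (by omega)
      refine ⟨w ⟨k, by omega⟩, ?_⟩
      rw [phi_w hw]
      simp only
      have e := cT_succ T k
      split_ifs at e <;> omega

/-- bVal of successor -/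
lemma bVal_succ {n : ℕ} (w : Fin n → ℤ) (i : Fin n) : bVal w (i + 1) = w i := by
  unfold bVal; rw [dif_pos ⟨by omega, by omega⟩]; rfl

lemma bVal_zero {n : ℕ} (w : Fin n → ℤ) : bVal w 0 = 0 := by
  unfold bVal; simp

lemma phi_bVal {n : ℕ} {w : Fin n → ℤ} (hw : IsSignedPerm w) (T : Finset ℕ) (m : ℕ) (hm : m ≤ n) :
    phi w T (bVal w m) = cT T m := by
  cases m with
  | zero =>
    rw [bVal_zero, cT_zero]
    have h1 := phi_odd w T 0
    simp only [neg_zero] at h1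
    push_cast; omega
  | succ k =>
    have := bVal_succ w ⟨k, by omega⟩
    simp only at this
    rw [this, phi_w hw]

lemma bVal_incr {n r : ℕ} {w : Fin n → ℤ} {T : Finset ℕ} (hp : PTp n r (w, T)) (a : ℕ) :
    ∀ b, a < b → b ≤ n → cT T a = cT T b → bVal w a < bVal w b := by
  obtain ⟨hw, hD, hT, hr⟩ := hp
  dsimp only at *
  have step : ∀ t, t < n → cT T t = cT T (t + 1) → bVal w t < bVal w (t + 1) := by
    intro t ht hc
    rw [cT_succ] at hc
    have : t ∉ T := by intro h; simp [h] at hc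
    have h2 : ¬ bVal w (t + 1) < bVal w t := by
      intro h; exact this (hD (by simp [ht, h]))
    have h3 : bVal w (t + 1) ≠ bVal w t := by
      intro h
      have e1 := bVal_succ w ⟨t, ht⟩
      simp only at e1
      cases t with
      | zero => rw [bVal_zero, e1] at h; exact sp_ne hw _ h
      | succ k =>
        have e2 := bVal_succ w ⟨k, by omega⟩
        simp only at e2
        rw [e1, e2] at h
        have := sp_inj hw (Or.inl h)
        simp at this
    omega
  intro b hab
  induction b, hab using Nat.le_induction with
  | base => intro hb hc; exact step a (by omega) hc
  | succ b hb ih =>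
    intro hbn hc
    have h1 := cT_mono T (show a ≤ b by omega)
    have h2 := cT_mono T (show b ≤ b + 1 by omega)
    have := ih (by omega) (by omega)
    have := step b (by omega) (by omega)
    omega

def XP (n : ℕ) (f : ℤ → ℤ) (x : ℤ) : Prop := x ≠ 0 ∧ |x| ≤ (n : ℤ) ∧ (0 < f x ∨ (f x = 0 ∧ 0 < x))

lemma phi_XP {n r : ℕ} {w : Fin n → ℤ} {T : Finset ℕ} (hp : PTp n r (w, T)) (i : Fin n) :
    XP n (phi w T) (w i) := by
  have hw := hp.1
  refine ⟨sp_ne hw i, (hw.1 i).2, ?_⟩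
  rw [phi_w hw]
  by_cases h : cT T (i + 1) = 0
  · right
    refine ⟨by simp [h], ?_⟩
    have := bVal_incr hp 0 (i + 1) (by omega) (by omega) (by rw [h, cT_zero])
    rwa [bVal_zero, bVal_succ] at this
  · left; omega

lemma XP_range {n : ℕ} {w : Fin n → ℤ} {f : ℤ → ℤ} (hw : IsSignedPerm w)
    (hf : ∀ x, f (-x) = -f x) (hX : ∀ i, XP n f (w i)) (x : ℤ) : XP n f x ↔ ∃ i, w i = x := by
  constructor
  · rintro ⟨h0, hn, h⟩
    obtain ⟨i, hi | hi⟩ := sp_surj hw x h0 hn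
    · exact ⟨i, hi⟩
    · have := (hX i).2.2
      rw [hi, hf] at this
      omega
  · rintro ⟨i, rfl⟩; exact hX i

lemma phi_strict {n r : ℕ} {w : Fin n → ℤ} {T : Finset ℕ} (hp : PTp n r (w, T)) :
    StrictMono fun i => toLex (phi w T (w i), w i) := by
  intro i j hij
  rw [Prod.Lex.toLex_lt_toLex]
  simp only [phi_w hp.1]
  have h1 := cT_mono T (show (i : ℕ) + 1 ≤ j + 1 by have : (i : ℕ) < j := hij; omega)
  by_cases h : cT T (i + 1) = cT T (j + 1)
  · right
    refine ⟨by rw [h], ?_⟩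
    have := bVal_incr hp (i + 1) (j + 1) (by have : (i : ℕ) < j := hij; omega) (by omega) h
    rwa [bVal_succ, bVal_succ] at this
  · left; omega

lemma phi_inj {n r : ℕ} (p q : (Fin n → ℤ) × Finset ℕ) (hp : PTp n r p) (hq : PTp n r q)
    (h : phi p.1 p.2 = phi q.1 q.2) : p = q := by
  obtain ⟨w, T⟩ := p
  obtain ⟨w', T'⟩ := q
  dsimp only at h
  have hw : w = w' := by
    have h1 := phi_strict hp
    have h2 := phi_strict hq
    rw [← h] at h2
    have hr : Set.range (fun i => toLex (phi w T (w i), w i))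
        = Set.range (fun i => toLex (phi w T (w' i), w' i)) := by
      have e : ∀ x, (∃ i, w i = x) ↔ ∃ i, w' i = x := by
        intro x
        rw [← XP_range hp.1 (phi_odd w T) (phi_XP hp),
          ← XP_range hq.1 (phi_odd w' T') (phi_XP hq), h]
      ext y
      constructor
      · rintro ⟨i, rfl⟩
        obtain ⟨j, hj⟩ := (e (w i)).1 ⟨i, rfl⟩
        exact ⟨j, by simp [hj]⟩
      · rintro ⟨i, rfl⟩
        obtain ⟨j, hj⟩ := (e (w' i)).2 ⟨i, rfl⟩
        exact ⟨j, by simp [hj]⟩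
    have := (StrictMono.range_inj h1 h2).1 hr
    funext i
    have := congrFun this i
    simpa using (congrArg (fun z => (ofLex z).2) this)
  subst hw
  have hc : ∀ m ≤ n, cT T m = cT T' m := by
    intro m hm
    have e1 := phi_bVal hp.1 T m hm
    have e2 := phi_bVal hp.1 T' m hm
    rw [h] at e1
    simp only at e1 e2
    omega
  congr 1
  ext t
  have hT := hp.2.2.1
  have hT' := hq.2.2.1
  dsimp only at hT hT'
  by_cases ht : t < n
  · have e1 := hc t (by omega)
    have e2 := hc (t + 1) (by omega)
    rw [cT_succ, cT_succ] at e2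
    split_ifs at e2 with a b b <;> simp_all
  · constructor
    · intro h; have := hT h; simp at this; omega
    · intro h; have := hT' h; simp at this; omega

lemma XP_card (n : ℕ) (f : ℤ → ℤ) (hf : ∀ x, f (-x) = -f x) :
    ((Finset.Icc (-n : ℤ) n).filter (XP n f)).card = n := by
  have : (Finset.Icc (1 : ℤ) n).card = n := by simp
  refine Eq.trans ?_ this
  apply card_bij (fun x _ => |x|)
  · intro x hx
    simp only [mem_filter, XP] at hx
    simp only [mem_Icc]
    exact ⟨Int.one_le_abs hx.2.1, hx.2.2.1⟩
  · intro x hx y hy hxy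
    simp only [mem_filter, XP] at hx hy
    rcases abs_eq_abs.1 hxy with h | h
    · exact h
    · rw [h, hf] at hx
      omega
  · intro y hy
    simp only [mem_Icc] at hy
    by_cases h : 0 ≤ f y
    · refine ⟨y, ?_, abs_of_pos (by omega)⟩
      simp only [mem_filter, mem_Icc, XP]
      rw [abs_of_pos (by omega)]
      omega
    · refine ⟨-y, ?_, by rw [abs_neg]; exact abs_of_pos (by omega)⟩
      simp only [mem_filter, mem_Icc, XP, hf]
      rw [abs_neg, abs_of_pos (by omega)]
      omega

lemma exists_sort (n : ℕ) (f : ℤ → ℤ) (hf : ∀ x, f (-x) = -f x) :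
    ∃ w : Fin n → ℤ, IsSignedPerm w ∧ (∀ i, XP n f (w i)) ∧
      StrictMono fun i => toLex (f (w i), w i) := by
  set X := (Finset.Icc (-n : ℤ) n).filter (XP n f) with hX
  have hinj : Function.Injective (fun x : ℤ => toLex (f x, x)) := by
    intro x y h
    simpa using (congrArg (fun z => (ofLex z).2) h)
  have hc : (X.image fun x => toLex (f x, x)).card = n := by
    rw [card_image_of_injective _ hinj, hX, XP_card n f hf]
  set e := (X.image fun x => toLex (f x, x)).orderEmbOfFin hc with he
  have hmem : ∀ i, ∃ x, XP n f x ∧ toLex (f x, x) = e i := by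
    intro i
    have := Finset.orderEmbOfFin_mem (X.image fun x => toLex (f x, x)) hc i
    simp only [mem_image, hX, mem_filter] at this
    obtain ⟨x, hx, h⟩ := this
    exact ⟨x, hx.2, h⟩
  choose w hw hwe using hmem
  refine ⟨w, ⟨?_, ?_⟩, hw, ?_⟩
  · intro i
    exact ⟨Int.one_le_abs (hw i).1, (hw i).2.1⟩
  · intro i j hij
    apply e.injective
    rw [← hwe, ← hwe]
    rcases abs_eq_abs.1 hij with h | h
    · rw [h]
    · have h1 := hw i
      have h2 := hw j
      simp only [XP] at h1 h2
      rw [h, hf] at h1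
      omega
  · intro i j hij
    simp only [hwe]
    exact e.strictMono hij

lemma phi_surj {n r : ℕ} (f : ℤ → ℤ) (h : OFp n r f) :
    ∃ p, PTp n r p ∧ phi p.1 p.2 = f := by
  obtain ⟨hodd, hsupp, hle, hsurj⟩ := h
  obtain ⟨w, hw, hX, hs⟩ := exists_sort n f hodd
  have f0 : f 0 = 0 := by
    have h1 := hodd 0
    simp only [neg_zero] at h1
    omega
  have gnn : ∀ m, 0 ≤ f (bVal w m) := by
    intro m
    unfold bVal
    split_ifs with h
    · have := (hX ⟨m - 1, by omega⟩).2.2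
      omega
    · omega
  -- strict key monotonicity
  have key : ∀ a b, a < b → b ≤ n → f (bVal w a) < f (bVal w b) ∨
      f (bVal w a) = f (bVal w b) ∧ bVal w a < bVal w b := by
    intro a b hab hb
    obtain ⟨b, rfl⟩ : ∃ b', b = b' + 1 := ⟨b - 1, by omega⟩
    have e1 := bVal_succ w ⟨b, by omega⟩
    simp only at e1
    cases a with
    | zero =>
      rw [bVal_zero, f0, e1]
      have := (hX ⟨b, by omega⟩).2.2
      omega
    | succ a =>
      have e2 := bVal_succ w ⟨a, by omega⟩
      simp only at e2
      rw [e1, e2]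
      have := hs (show (⟨a, by omega⟩ : Fin n) < ⟨b, by omega⟩ by simp; omega)
      rw [Prod.Lex.toLex_lt_toLex] at this
      exact this
  have hfind : ∀ j : ℤ, 1 ≤ j → j ≤ r → ∃ m, m ≤ n ∧ f (bVal w m) = j := by
    intro j h1 h2
    obtain ⟨x, hx⟩ := hsurj j h1 h2
    have hXx : XP n f x := by
      refine ⟨?_, ?_, by omega⟩
      · rintro rfl; omega
      · by_contra hc
        have := hsupp x (by omega)
        omega
    obtain ⟨i, hi⟩ := (XP_range hw hodd hX x).1 hXx
    exact ⟨i + 1, by omega, by rw [bVal_succ, hi, hx]⟩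
  set T := (Finset.range n).filter (fun t => f (bVal w t) < f (bVal w (t + 1))) with hT
  have hc : ∀ m, m ≤ n → (cT T m : ℤ) = f (bVal w m) := by
    intro m
    induction m with
    | zero => intro _; rw [cT_zero, bVal_zero, f0]; rfl
    | succ m ih =>
      intro hm
      have ih := ih (by omega)
      rw [cT_succ]
      have k := key m (m + 1) (by omega) hm
      by_cases hlt : f (bVal w m) < f (bVal w (m + 1))
      · have : m ∈ T := by simp [hT, hlt]; omega
        rw [if_pos this]
        by_contra hne
        push_cast at hne
        have hr := hle (bVal w (m + 1))
        have hr := (abs_le.1 hr).2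
        obtain ⟨m', hm', he⟩ := hfind (f (bVal w m) + 1) (by have := gnn m; omega) (by omega)
        rcases lt_trichotomy m' m with h | h | h
        · have := key m' m h (by omega)
          omega
        · subst h; omega
        · rcases lt_trichotomy (m + 1) m' with h' | h' | h'
          · have := key (m + 1) m' h' (by omega)
            omega
          · subst h'; omega
          · omega
      · have : m ∉ T := by simp [hT]; omega
        rw [if_neg this]
        push_cast; omega
  have hTn : T ⊆ Finset.range n := filter_subset _ _
  have hp : PTp n r (w, T) := by
    refine ⟨hw, ?_, hTn, ?_⟩
    · intro t ht
      simp only [mem_filter, mem_range] at ht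
      have := key t (t + 1) (by omega) (by omega)
      simp only [hT, mem_filter, mem_range]
      omega
    · show T.card = r
      rw [← cT_top T n hTn]
      have h1 := hc n le_rfl
      have h2 := (abs_le.1 (hle (bVal w n))).2
      by_cases hr : r = 0
      · omega
      · obtain ⟨m, hm, he⟩ := hfind r (by omega) le_rfl
        rcases hm.lt_or_eq with h | h
        · have := key m n h le_rfl
          omega
        · subst h; omega
  refine ⟨(w, T), hp, ?_⟩
  apply odd_ext hw (phi_odd w T) hodd (phi_supp hw T) hsupp
  intro i
  rw [phi_w hw, hc (i + 1) (by omega), bVal_succ]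

lemma card_OF_PT (n r : ℕ) : Nat.card {p // PTp n r p} = Nat.card {f // OFp n r f} := by
  apply Nat.card_eq_of_bijective (fun p => (⟨phi p.1.1 p.1.2, phi_mem p.1 p.2⟩ : {f // OFp n r f}))
  constructor
  · intro p q h
    exact Subtype.ext (phi_inj _ _ p.2 q.2 (congrArg Subtype.val h))
  · rintro ⟨f, hf⟩
    obtain ⟨p, hp, e⟩ := phi_surj f hf
    exact ⟨⟨p, hp⟩, Subtype.ext e⟩

noncomputable def SPf (n : ℕ) : Finset (Fin n → ℤ) :=
  (Fintype.piFinset fun _ => Finset.Icc (-n : ℤ) n).filter IsSignedPerm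

lemma mem_SPf {n : ℕ} (w : Fin n → ℤ) : w ∈ SPf n ↔ IsSignedPerm w := by
  unfold SPf
  simp only [mem_filter, Fintype.mem_piFinset, mem_Icc, and_iff_right_iff_imp]
  intro h i
  exact abs_le.1 (h.1 i).2

lemma EulB_eq (n k : ℕ) : EulB n k = ((SPf n).filter fun w => desB w = k).card := by
  unfold EulB
  rw [Nat.subtype_card]
  intro w
  rw [mem_filter, mem_SPf]

lemma card_between (R D : Finset ℕ) (h : D ⊆ R) (r : ℕ) (hr : D.card ≤ r) :
    ((R.powersetCard r).filter fun T => D ⊆ T).card = (R.card - D.card).choose (r - D.card) := by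
  rw [← card_sdiff_of_subset h, ← card_powersetCard]
  symm
  apply card_bij (fun T _ => T ∪ D)
  · intro T hT
    simp only [mem_powersetCard, mem_filter] at *
    have hd : Disjoint T D := disjoint_of_subset_left hT.1 sdiff_disjoint
    refine ⟨⟨union_subset (hT.1.trans sdiff_subset) h, ?_⟩, subset_union_right⟩
    rw [card_union_of_disjoint hd]; omega
  · intro T hT T' hT' e
    simp only [mem_powersetCard] at *
    have hd : Disjoint T D := disjoint_of_subset_left hT.1 sdiff_disjoint
    have hd' : Disjoint T' D := disjoint_of_subset_left hT'.1 sdiff_disjoint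
    rw [← union_sdiff_cancel_right hd, e, union_sdiff_cancel_right hd']
  · intro T hT
    simp only [mem_powersetCard, mem_filter] at hT
    refine ⟨T \ D, ?_, sdiff_union_of_subset hT.2⟩
    simp only [mem_powersetCard]
    refine ⟨sdiff_subset_sdiff hT.1.1 le_rfl, ?_⟩
    rw [card_sdiff_of_subset hT.2]; omega

lemma card_PT (n r : ℕ) : Nat.card {p // PTp n r p} =
    ∑ k ∈ Finset.range (r + 1), EulB n k * Nat.choose (n - k) (r - k) := by
  have h1 : Nat.card {p // PTp n r p} = (((SPf n) ×ˢ (Finset.range n).powersetCard r).filter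
      fun p => ((Finset.range n).filter fun i => bVal p.1 (i + 1) < bVal p.1 i) ⊆ p.2).card := by
    rw [Nat.subtype_card]
    intro p
    simp only [mem_filter, mem_product, mem_SPf, mem_powersetCard, PTp]
    tauto
  rw [h1, card_filter, sum_product]
  simp only [← card_filter]
  have h2 : ∀ w : Fin n → ℤ, (((Finset.range n).powersetCard r).filter fun T =>
      ((Finset.range n).filter fun i => bVal w (i + 1) < bVal w i) ⊆ T).card =
      ∑ k ∈ Finset.range (r + 1), if desB w = k then Nat.choose (n - k) (r - k) else 0 := by
    intro w
    rw [sum_ite_eq]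
    split_ifs with h
    · rw [mem_range] at h
      rw [card_between _ _ (filter_subset _ _) r (by unfold desB at h; omega), card_range]
      rfl
    · rw [card_eq_zero, filter_eq_empty_iff]
      intro T hT hs
      rw [mem_powersetCard] at hT
      have := card_le_card hs
      simp only [mem_range] at h
      unfold desB at h
      omega
  simp only [h2]
  rw [sum_comm]
  apply sum_congr rfl
  intro k _
  rw [EulB_eq, ← sum_filter, sum_const, smul_eq_mul]

def goodSeq {α : Type*} (M : Finset α) (ι : α → α) (r : ℕ) (a : Fin r → α) : Prop :=
  (∀ j, a j ∈ M) ∧ ∀ i j, i ≠ j → a i ≠ a j ∧ a i ≠ ι (a j)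

lemma card_goodSeq {α : Type*} (ι : α → α) (hι : ∀ x, ι (ι x) = x) (r : ℕ) :
    ∀ M : Finset α, (∀ x ∈ M, ι x ∈ M) → (∀ x ∈ M, ι x ≠ x) → M.card = 2 * r →
      Nat.card {a // goodSeq M ι r a} = 2 ^ r * r.factorial := by
  induction r with
  | zero =>
    intro M _ _ _
    simp only [pow_zero, Nat.factorial_zero, mul_one]
    rw [Nat.card_eq_one_iff_unique]
    refine ⟨⟨fun a b => Subtype.ext (Subsingleton.elim _ _)⟩, ⟨⟨Fin.elim0, ?_⟩⟩⟩
    exact ⟨fun j => j.elim0, fun j => j.elim0⟩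
  | succ r ih =>
    intro M hM hne hc
    have e : {a // goodSeq M ι (r + 1) a} ≃
        Σ x : M, {a // goodSeq (M \ {x.1, ι x.1}) ι r a} :=
      { toFun := fun a => ⟨⟨a.1 0, a.2.1 0⟩, ⟨Fin.tail a.1, by
          refine ⟨fun j => ?_, fun i j hij => ?_⟩
          · simp only [mem_sdiff, mem_insert, mem_singleton, Fin.tail]
            have := a.2.2 j.succ 0 (Fin.succ_ne_zero j)
            exact ⟨a.2.1 _, by tauto⟩
          · exact a.2.2 _ _ (by simpa using hij)⟩⟩
        invFun := fun s => ⟨Fin.cons s.1.1 s.2.1, by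
          obtain ⟨⟨x, hx⟩, ⟨a, ha⟩⟩ := s
          dsimp only at *
          have hm := ha.1
          simp only [mem_sdiff, mem_insert, mem_singleton, not_or] at hm
          refine ⟨fun j => ?_, fun i j hij => ?_⟩
          · refine Fin.cases ?_ (fun j => ?_) j
            · simpa using hx
            · simpa using (hm j).1
          · revert hij
            refine Fin.cases ?_ (fun i => ?_) i <;> refine Fin.cases ?_ (fun j => ?_) j
            · simp
            · intro _
              simp only [Fin.cons_zero, Fin.cons_succ]
              have := (hm j).2
              refine ⟨fun h => this.1 h.symm, fun h => this.2 ?_⟩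
              rw [h, hι]
            · intro _
              simp only [Fin.cons_zero, Fin.cons_succ]
              exact (hm i).2
            · intro hij
              simp only [Fin.cons_succ]
              exact ha.2 i j (by simpa using hij)⟩
        left_inv := fun a => by
          apply Subtype.ext
          simp
        right_inv := fun s => by
          obtain ⟨⟨x, hx⟩, ⟨a, ha⟩⟩ := s
          rfl }
    have h2 : ∀ x : M, Nat.card {a // goodSeq (M \ {x.1, ι x.1}) ι r a} = 2 ^ r * r.factorial := by
      rintro ⟨x, hx⟩
      apply ih
      · intro y hy
        simp only [mem_sdiff, mem_insert, mem_singleton, not_or] at hy ⊢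
        refine ⟨hM y hy.1, fun h => hy.2.2 ?_, fun h => hy.2.1 ?_⟩
        · rw [← h, hι]
        · rw [← hι y, h, hι]
      · intro y hy
        exact hne y (mem_sdiff.1 hy).1
      · rw [card_sdiff_of_subset, card_pair (hne x hx).symm]
        · omega
        · intro y hy
          simp only [mem_insert, mem_singleton] at hy
          rcases hy with rfl | rfl
          · exact hx
          · exact hM _ hx
    have hpos : 2 ^ r * r.factorial ≠ 0 := by positivity
    have e2 : ∀ x : M, Nonempty ({a // goodSeq (M \ {x.1, ι x.1}) ι r a} ≃ Fin (2 ^ r * r.factorial)) := by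
      intro x
      have : Finite {a // goodSeq (M \ {x.1, ι x.1}) ι r a} :=
        Nat.finite_of_card_ne_zero (by rw [h2 x]; exact hpos)
      exact ⟨Finite.equivFinOfCardEq (h2 x)⟩
    replace e2 := fun x => Classical.choice (e2 x)
    rw [Nat.card_congr (e.trans ((Equiv.sigmaCongrRight e2).trans (Equiv.sigmaEquivProd _ _))),
      Nat.card_prod]
    simp only [Nat.card_eq_fintype_card, Fintype.card_coe, Fintype.card_fin, hc, Nat.factorial_succ,
      pow_succ]
    ring

lemma negSet_negSet (C : Finset ℤ) : negSet (negSet C) = C := by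
  unfold negSet; rw [image_image]; simp

lemma mem_negSet (C : Finset ℤ) (x : ℤ) : x ∈ negSet C ↔ -x ∈ C := by
  unfold negSet; simp only [mem_image]
  constructor
  · rintro ⟨y, hy, rfl⟩; simpa
  · intro h; exact ⟨-x, h, by simp⟩

lemma BP_ext {n : ℕ} {P Q : BPartition n} (h : P.blocks = Q.blocks) : P = Q := by
  cases P; cases Q; simp_all

noncomputable def nzb {n : ℕ} (P : BPartition n) : Finset (Finset ℤ) :=
  P.blocks.filter fun C => negSet C ≠ C

def QTp (n r : ℕ) (p : BPartition n × (Fin r → Finset ℤ)) : Prop :=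
  hasPairs p.1 r ∧ goodSeq (nzb p.1) negSet r p.2

lemma card_QT (n r : ℕ) : Nat.card {p // QTp n r p} = 2 ^ r * r.factorial * SB n r := by
  have e : {p // QTp n r p} ≃ Σ P : {P : BPartition n // hasPairs P r},
      {a // goodSeq (nzb P.1) negSet r a} :=
    { toFun := fun p => ⟨⟨p.1.1, p.2.1⟩, ⟨p.1.2, p.2.2⟩⟩
      invFun := fun s => ⟨(s.1.1, s.2.1), s.1.2, s.2.2⟩
      left_inv := fun p => rfl
      right_inv := fun s => rfl }
  have h2 : ∀ P : {P : BPartition n // hasPairs P r},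
      Nat.card {a // goodSeq (nzb P.1) negSet r a} = 2 ^ r * r.factorial := by
    rintro ⟨P, hP⟩
    apply card_goodSeq _ negSet_negSet
    · intro C hC
      simp only [nzb, mem_filter] at hC ⊢
      refine ⟨P.closed C hC.1, ?_⟩
      rw [negSet_negSet]; exact hC.2.symm
    · intro C hC
      exact (mem_filter.1 hC).2
    · exact hP
  have hpos : 2 ^ r * r.factorial ≠ 0 := by positivity
  have e2 : ∀ P : {P : BPartition n // hasPairs P r},
      Nonempty ({a // goodSeq (nzb P.1) negSet r a} ≃ Fin (2 ^ r * r.factorial)) := by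
    intro x
    have : Finite {a // goodSeq (nzb x.1) negSet r a} :=
      Nat.finite_of_card_ne_zero (by rw [h2 x]; exact hpos)
    exact ⟨Finite.equivFinOfCardEq (h2 x)⟩
  replace e2 := fun x => Classical.choice (e2 x)
  rw [Nat.card_congr (e.trans ((Equiv.sigmaCongrRight e2).trans (Equiv.sigmaEquivProd _ _))),
      Nat.card_prod]
  simp only [Nat.card_eq_fintype_card, Fintype.card_fin]
  rw [mul_comm]; congr 1

noncomputable def Sn (n : ℕ) : Finset ℤ := (Finset.Icc (-n : ℤ) n).filter (· ≠ 0)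

lemma mem_Sn (n : ℕ) (x : ℤ) : x ∈ Sn n ↔ x ≠ 0 ∧ |x| ≤ (n : ℤ) := by
  simp only [Sn, mem_filter, mem_Icc, abs_le]; tauto

noncomputable def fib (n : ℕ) (f : ℤ → ℤ) (v : ℤ) : Finset ℤ := (Sn n).filter fun y => f y = v

lemma mem_fib {n : ℕ} {f : ℤ → ℤ} {v y : ℤ} : y ∈ fib n f v ↔ y ∈ Sn n ∧ f y = v := mem_filter

lemma fib_neg {n : ℕ} {f : ℤ → ℤ} (hf : ∀ x, f (-x) = -f x) (v : ℤ) :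
    negSet (fib n f v) = fib n f (-v) := by
  ext y
  rw [mem_negSet, mem_fib, mem_fib, mem_Sn, mem_Sn, hf, abs_neg]
  simp only [ne_eq, neg_eq_zero]
  constructor <;> rintro ⟨h1, h2⟩ <;> exact ⟨h1, by omega⟩

lemma fib_inj {n : ℕ} {f : ℤ → ℤ} {u v : ℤ} (hu : (fib n f u).Nonempty)
    (h : fib n f u = fib n f v) : u = v := by
  obtain ⟨x, hx⟩ := hu
  have h1 := hx
  rw [h] at h1
  rw [mem_fib] at hx h1
  rw [← hx.2, h1.2]

noncomputable def toBP (n : ℕ) (f : ℤ → ℤ) (hf : ∀ x, f (-x) = -f x) : BPartition n where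
  blocks := (Sn n).image fun x => fib n f (f x)
  cover := by
    intro x
    rw [← mem_Sn]
    simp only [mem_image, exists_exists_and_eq_and, mem_fib]
    constructor
    · intro h; exact ⟨x, h, h, rfl⟩
    · rintro ⟨a, _, h, _⟩; exact h
  nonempty := by
    intro C hC
    simp only [mem_image] at hC
    obtain ⟨x, hx, rfl⟩ := hC
    exact ⟨x, mem_fib.2 ⟨hx, rfl⟩⟩
  disj := by
    intro C hC C' hC' hne
    simp only [mem_image] at hC hC'
    obtain ⟨x, hx, rfl⟩ := hC
    obtain ⟨y, hy, rfl⟩ := hC'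
    rw [Finset.disjoint_left]
    intro z hz hz'
    rw [mem_fib] at hz hz'
    apply hne
    rw [← hz.2, ← hz'.2]
  closed := by
    intro C hC
    simp only [mem_image] at hC ⊢
    obtain ⟨x, hx, rfl⟩ := hC
    refine ⟨-x, ?_, ?_⟩
    · rw [mem_Sn] at *; simpa using hx
    · rw [fib_neg hf, hf]
  zeroUnique := by
    intro C hC C' hC' h h'
    simp only [mem_image] at hC hC'
    obtain ⟨x, hx, rfl⟩ := hC
    obtain ⟨y, hy, rfl⟩ := hC'
    rw [fib_neg hf] at h h'
    have h1 := fib_inj ⟨x, mem_fib.2 ⟨hx, rfl⟩⟩ h.symm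
    have h2 := fib_inj ⟨y, mem_fib.2 ⟨hy, rfl⟩⟩ h'.symm
    congr 1; omega

lemma OF_zero {n r : ℕ} {f : ℤ → ℤ} (h : OFp n r f) : f 0 = 0 := by
  have h1 := h.1 0
  simp only [neg_zero] at h1
  omega

lemma OF_fib {n r : ℕ} {f : ℤ → ℤ} (h : OFp n r f) (x : ℤ) (hx : f x ≠ 0) : x ∈ Sn n := by
  rw [mem_Sn]
  refine ⟨?_, ?_⟩
  · rintro rfl; exact hx (OF_zero h)
  · by_contra hc
    exact hx (h.2.1 x (by omega))

lemma OF_ex {n r : ℕ} {f : ℤ → ℤ} (h : OFp n r f) (j : ℤ) (h0 : j ≠ 0) (hj : |j| ≤ r) :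
    ∃ x ∈ Sn n, f x = j := by
  rcases lt_or_gt_of_ne h0 with h1 | h1
  · rw [abs_of_neg h1] at hj
    obtain ⟨x, hx⟩ := h.2.2.2 (-j) (by omega) hj
    have := h.1 x
    exact ⟨-x, OF_fib h _ (by omega), by omega⟩
  · rw [abs_of_pos h1] at hj
    obtain ⟨x, hx⟩ := h.2.2.2 j (by omega) hj
    exact ⟨x, OF_fib h _ (by omega), hx⟩

lemma nzb_toBP {n r : ℕ} {f : ℤ → ℤ} (h : OFp n r f) :
    nzb (toBP n f h.1) = (Sn r).image (fib n f) := by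
  ext C
  simp only [nzb, toBP, mem_filter, mem_image]
  constructor
  · rintro ⟨⟨x, hx, rfl⟩, hne⟩
    refine ⟨f x, ?_, rfl⟩
    rw [mem_Sn]
    refine ⟨?_, h.2.2.1 x⟩
    intro h0
    apply hne
    rw [fib_neg h.1, h0]; rfl
  · rintro ⟨j, hj, rfl⟩
    rw [mem_Sn] at hj
    obtain ⟨x, hx, rfl⟩ := OF_ex h j hj.1 hj.2
    refine ⟨⟨x, hx, rfl⟩, ?_⟩
    rw [fib_neg h.1]
    intro e
    have := fib_inj ⟨x, mem_fib.2 ⟨hx, rfl⟩⟩ e.symm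
    omega

lemma Sn_card (r : ℕ) : (Sn r).card = 2 * r := by
  unfold Sn
  rw [filter_ne', card_erase_of_mem (by simp)]
  simp; omega

lemma psi_mem {n r : ℕ} {f : ℤ → ℤ} (h : OFp n r f) :
    QTp n r (toBP n f h.1, fun j => fib n f (j + 1)) := by
  have hne : ∀ j : Fin r, (fib n f (j + 1)).Nonempty := by
    intro j
    obtain ⟨x, hx, e⟩ := OF_ex h (j + 1) (by omega) (by rw [abs_of_pos (by omega)]; omega)
    exact ⟨x, mem_fib.2 ⟨hx, e⟩⟩
  refine ⟨?_, ?_, ?_⟩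
  · show (nzb (toBP n f h.1)).card = _
    rw [nzb_toBP h, card_image_of_injOn, Sn_card]
    intro u hu v hv e
    rw [mem_coe, mem_Sn] at hu
    obtain ⟨x, hx, he⟩ := OF_ex h u hu.1 hu.2
    exact fib_inj ⟨x, mem_fib.2 ⟨hx, he⟩⟩ e
  · intro j
    rw [nzb_toBP h]
    apply mem_image_of_mem
    rw [mem_Sn, abs_of_pos (by omega)]
    omega
  · intro i j hij
    have : (i : ℕ) ≠ j := fun h => hij (Fin.ext h)
    refine ⟨fun e => ?_, fun e => ?_⟩
    · have := fib_inj (hne i) e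
      omega
    · rw [fib_neg h.1] at e
      have := fib_inj (hne i) e
      omega

lemma psi_inj {n r : ℕ} {f g : ℤ → ℤ} (hf : OFp n r f) (hg : OFp n r g)
    (h : ∀ j : Fin r, fib n f (j + 1) = fib n g (j + 1)) : f = g := by
  have key : ∀ (f g : ℤ → ℤ), OFp n r f → (∀ j : Fin r, fib n f (j + 1) = fib n g (j + 1)) →
      ∀ x, 0 < f x → f x = g x := by
    intro f g hf h x hx
    have h1 := (abs_le.1 (hf.2.2.1 x)).2
    have h2 := h ⟨(f x - 1).toNat, by omega⟩
    have h3 : (((f x - 1).toNat : ℕ) : ℤ) + 1 = f x := by omega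
    simp only [h3] at h2
    have h4 : x ∈ fib n f (f x) := mem_fib.2 ⟨OF_fib hf x (by omega), rfl⟩
    rw [h2, mem_fib] at h4
    exact h4.2.symm
  funext x
  have a1 := key f g hf h x
  have a2 := key f g hf h (-x)
  have a3 := key g f hg (fun j => (h j).symm) x
  have a4 := key g f hg (fun j => (h j).symm) (-x)
  rw [hf.1, hg.1] at a2 a4
  omega

lemma psi_surj {n r : ℕ} (P : BPartition n) (a : Fin r → Finset ℤ) (h : QTp n r (P, a)) :
    ∃ f, ∃ hf : OFp n r f, toBP n f hf.1 = P ∧ ∀ j : Fin r, fib n f (j + 1) = a j := by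
  obtain ⟨hP, ha, hd⟩ := h
  dsimp only at *
  have hb : ∀ j, a j ∈ P.blocks := fun j => (mem_filter.1 (ha j)).1
  have hz : ∀ j, negSet (a j) ≠ a j := fun j => (mem_filter.1 (ha j)).2
  have uniq : ∀ C ∈ P.blocks, ∀ C' ∈ P.blocks, ∀ x, x ∈ C → x ∈ C' → C = C' := by
    intro C hC C' hC' x hx hx'
    by_contra hne
    exact Finset.disjoint_left.1 (P.disj C hC C' hC' hne) hx hx'
  have u1 : ∀ i j x, x ∈ a i → x ∈ a j → i = j := by
    intro i j x hi hj
    by_contra hne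
    exact (hd i j hne).1 (uniq _ (hb i) _ (hb j) x hi hj)
  have u2 : ∀ i j x, x ∈ a i → -x ∈ a j → False := by
    intro i j x hi hj
    have e := uniq _ (hb i) _ (P.closed _ (hb j)) x hi ((mem_negSet _ _).2 hj)
    by_cases hij : i = j
    · subst hij; exact hz i e.symm
    · exact (hd i j hij).2 e
  set f : ℤ → ℤ := fun x => (∑ j : Fin r, if x ∈ a j then ((j : ℕ) : ℤ) + 1 else 0) -
    ∑ j : Fin r, if -x ∈ a j then ((j : ℕ) : ℤ) + 1 else 0 with hfdef
  have fodd : ∀ x, f (-x) = - f x := by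
    intro x; simp [hfdef]
  have f1 : ∀ j x, x ∈ a j → f x = (j : ℕ) + 1 := by
    intro j x hx
    simp only [hfdef]
    rw [sum_eq_single j, sum_eq_zero]
    · simp [hx]
    · intro i _; rw [if_neg]; intro h; exact u2 j i x hx h
    · intro i _ hi; rw [if_neg]; intro h; exact hi (u1 i j x h hx)
    · simp
  have f2 : ∀ j x, -x ∈ a j → f x = -((j : ℕ) + 1) := by
    intro j x hx
    have := f1 j _ hx
    rw [fodd] at this
    omega
  have f3 : ∀ x, (∀ j, x ∉ a j) → (∀ j, -x ∉ a j) → f x = 0 := by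
    intro x h1 h2
    simp [hfdef, h1, h2]
  -- every nonzero block is listed
  have hlist : ∀ C ∈ P.blocks, negSet C ≠ C → ∃ j, C = a j ∨ C = negSet (a j) := by
    have himg : (univ : Finset (Fin r × Bool)).image
        (fun p => if p.2 then a p.1 else negSet (a p.1)) = nzb P := by
      apply eq_of_subset_of_card_le
      · intro C hC
        simp only [mem_image, mem_univ, true_and] at hC
        obtain ⟨⟨j, b⟩, rfl⟩ := hC
        cases b
        · simp only [nzb, mem_filter]
          refine ⟨P.closed _ (hb j), ?_⟩
          simp only [Bool.false_eq_true, if_false]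
          rw [negSet_negSet]; exact (hz j).symm
        · simpa using ha j
      · rw [card_image_of_injective]
        · simp only [card_univ, Fintype.card_prod, Fintype.card_fin, Fintype.card_bool]
          have : (nzb P).card = 2 * r := hP
          omega
        · rintro ⟨i, b⟩ ⟨j, c⟩ e
          have hnn : ∀ C D : Finset ℤ, negSet C = D → C = negSet D := by
            intro C D h; rw [← h, negSet_negSet]
          by_cases hij : i = j
          · subst hij
            have := hz i
            cases b <;> cases c <;> simp at e
            · rfl
            · exact absurd e this
            · exact absurd e.symm this
            · rfl
          · have h1 := hd i j hij
            exfalso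
            cases b <;> cases c <;> simp at e
            · exact h1.1 (by rw [hnn _ _ e, negSet_negSet])
            · exact h1.2 (hnn _ _ e)
            · exact h1.2 e
            · exact h1.1 e
    intro C hC hne
    have : C ∈ nzb P := mem_filter.2 ⟨hC, hne⟩
    rw [← himg] at this
    simp only [mem_image, mem_univ, true_and] at this
    obtain ⟨⟨j, b⟩, rfl⟩ := this
    refine ⟨j, ?_⟩
    cases b <;> simp
  have hS : ∀ j x, x ∈ a j → x ∈ Sn n := by
    intro j x hx
    rw [mem_Sn]; exact (P.cover x).2 ⟨_, hb j, hx⟩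
  have hfib : ∀ (j : Fin r) x, f x = (j : ℕ) + 1 → x ∈ a j := by
    intro j x hx
    by_cases h1 : ∃ i, x ∈ a i
    · obtain ⟨i, hi⟩ := h1
      have := f1 i x hi
      have : i = j := Fin.ext (by omega)
      exact this ▸ hi
    · by_cases h2 : ∃ i, -x ∈ a i
      · obtain ⟨i, hi⟩ := h2
        have := f2 i x hi
        omega
      · push Not at h1 h2
        have := f3 x h1 h2
        omega
  have hOF : OFp n r f := by
    refine ⟨fodd, ?_, ?_, ?_⟩
    · intro x hx
      apply f3
      · intro j hj
        have := hS j x hj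
        rw [mem_Sn] at this
        omega
      · intro j hj
        have := hS j _ hj
        rw [mem_Sn, abs_neg] at this
        omega
    · intro x
      by_cases h1 : ∃ i, x ∈ a i
      · obtain ⟨i, hi⟩ := h1
        rw [f1 i x hi, abs_le]
        omega
      · by_cases h2 : ∃ i, -x ∈ a i
        · obtain ⟨i, hi⟩ := h2
          rw [f2 i x hi, abs_le]
          omega
        · push Not at h1 h2
          rw [f3 x h1 h2]
          simp
    · intro j h1 h2
      obtain ⟨x, hx⟩ := P.nonempty _ (hb ⟨(j - 1).toNat, by omega⟩)
      refine ⟨x, ?_⟩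
      rw [f1 _ x hx]
      simp only
      omega
  have hA : ∀ j : Fin r, fib n f (j + 1) = a j := by
    intro j
    ext x
    rw [mem_fib]
    exact ⟨fun h => hfib j x h.2, fun h => ⟨hS j x h, f1 j x h⟩⟩
  refine ⟨f, hOF, ?_, hA⟩
  have hblock : ∀ C ∈ P.blocks, ∀ x ∈ C, fib n f (f x) = C := by
    intro C hC x hx
    by_cases hne : negSet C = C
    · have hzero : ∀ y ∈ Sn n, f y = 0 ↔ y ∈ C := by
        intro y hy
        constructor
        · intro h0
          rw [mem_Sn] at hy
          obtain ⟨D, hD, hyD⟩ := (P.cover y).1 hy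
          by_cases hDn : negSet D = D
          · rw [P.zeroUnique C hC D hD hne hDn]; exact hyD
          · obtain ⟨j, rfl | rfl⟩ := hlist D hD hDn
            · have := f1 j y hyD
              omega
            · have := f2 j y ((mem_negSet _ _).1 hyD)
              omega
        · intro hyC
          apply f3
          · intro j hj
            have := uniq _ hC _ (hb j) y hyC hj
            exact hz j (this ▸ hne)
          · intro j hj
            rw [← hne, mem_negSet] at hyC
            have := uniq _ hC _ (hb j) _ hyC hj
            exact hz j (this ▸ hne)
      have hCS : ∀ y ∈ C, y ∈ Sn n := by
        intro y hy
        rw [mem_Sn]; exact (P.cover y).2 ⟨_, hC, hy⟩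
      rw [(hzero x (hCS x hx)).2 hx]
      ext y
      rw [mem_fib]
      exact ⟨fun h => (hzero y h.1).1 h.2, fun h => ⟨hCS y h, (hzero y (hCS y h)).2 h⟩⟩
    · obtain ⟨j, rfl | rfl⟩ := hlist C hC hne
      · rw [f1 j x hx, hA]
      · rw [f2 j x ((mem_negSet _ _).1 hx), ← fib_neg fodd, hA]
  apply BP_ext
  ext C
  simp only [toBP, mem_image]
  constructor
  · rintro ⟨x, hx, rfl⟩
    rw [mem_Sn] at hx
    obtain ⟨D, hD, hxD⟩ := (P.cover x).1 hx
    rw [hblock D hD x hxD]; exact hD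
  · intro hC
    obtain ⟨x, hx⟩ := P.nonempty C hC
    refine ⟨x, ?_, hblock C hC x hx⟩
    rw [mem_Sn]; exact (P.cover x).2 ⟨_, hC, hx⟩

lemma card_OF_QT (n r : ℕ) : Nat.card {f // OFp n r f} = Nat.card {p // QTp n r p} := by
  apply Nat.card_eq_of_bijective (fun f => (⟨_, psi_mem f.2⟩ : {p // QTp n r p}))
  constructor
  · intro f g h
    have h1 := congrArg (fun p => p.1.2) h
    exact Subtype.ext (psi_inj f.2 g.2 (fun j => congrFun h1 j))
  · rintro ⟨⟨P, a⟩, hp⟩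
    obtain ⟨f, hf, h1, h2⟩ := psi_surj P a hp
    refine ⟨⟨f, hf⟩, Subtype.ext (Prod.ext h1 (funext h2))⟩

/-- `2^r · r! · S_B(n,r) = Σ_{k=0}^{r} A_B(n,k) · C(n−k, r−k)`. -/
theorem stirling_eulerian_typeB (n r : ℕ) (h : r ≤ n) :
    2 ^ r * Nat.factorial r * SB n r =
      ∑ k ∈ Finset.range (r + 1), EulB n k * Nat.choose (n - k) (r - k) := by
  rw [← card_QT, ← card_OF_QT, ← card_OF_PT, card_PT]
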